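/- Let d be a design, λ0 ∈ ℝ, and τ0 ∈ ℝ^t with 1_t′τ0 = 0, τ0 ≠ 0, and suppose (στ0)′ C_{d22} (στ0) > 0 for every permutation σ of {1,…,t}. Let d* be the design with weights p*_s = (1/t!) ∑_σ p_{σ⁻¹∘s}. Then d* is a symmetric design, τ0′ C_{d*22} τ0 > 0, and in the Loewner order (1/t!) ∑_σ C_{σd,τ0,λ0} ≤ C_{d*,τ0,λ0}. -/

import Mathlib

open Matrix MeasureTheory
open scoped Classical

noncomputable section

/-- A treatment sequence: assigns a treatment in `Fin t` to each period in `Fin p`. -/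
abbrev TrtSeq (p t : ℕ) := Fin p → Fin t

/-- Treatment/period incidence matrix `T_s`. -/
def Tmat {p t : ℕ} (s : TrtSeq p t) : Matrix (Fin p) (Fin t) ℝ :=
  Matrix.of fun k i => if s k = i then 1 else 0

/-- Carryover incidence matrix `F_s`: first row zero, row `k` records the treatment
in period `k-1`. -/
def Fmat {p t : ℕ} (s : TrtSeq p t) : Matrix (Fin p) (Fin t) ℝ :=
  Matrix.of fun k i =>
    if (k : ℕ) = 0 then 0
    else if s ⟨(k : ℕ) - 1, Nat.lt_of_le_of_lt (Nat.sub_le _ _) k.isLt⟩ = i then 1 else 0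

/-- The all-ones `m × m` matrix `J_m`. -/
def Jmat (m : ℕ) : Matrix (Fin m) (Fin m) ℝ := Matrix.of fun _ _ => 1

/-- `B_t = I_t - J_t / t`. -/
def Bmat (t : ℕ) : Matrix (Fin t) (Fin t) ℝ := 1 - ((t : ℝ))⁻¹ • Jmat t

/-- `B̃ = Σ⁻¹ - Σ⁻¹ J_p Σ⁻¹ / (1_p' Σ⁻¹ 1_p)`. -/
def Btil {p : ℕ} (S : Matrix (Fin p) (Fin p) ℝ) : Matrix (Fin p) (Fin p) ℝ :=
  S⁻¹ - (((fun _ => (1 : ℝ)) : Fin p → ℝ) ⬝ᵥ (S⁻¹ *ᵥ fun _ => (1 : ℝ)))⁻¹ •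
    (S⁻¹ * Jmat p * S⁻¹)

/-- `G_1(s) = T_s`, `G_2(s) = F_s`. -/
def Gmat {p t : ℕ} (i : Fin 2) (s : TrtSeq p t) : Matrix (Fin p) (Fin t) ℝ :=
  if i = 0 then Tmat s else Fmat s

/-- An approximate design: nonnegative weights summing to one. -/
def IsDesign {p t : ℕ} (w : TrtSeq p t → ℝ) : Prop :=
  (∀ s, 0 ≤ w s) ∧ ∑ s : TrtSeq p t, w s = 1

/-- `Ĉ_{sij} = B_t G_i(s)' B̃ G_j(s) B_t`. -/
def Chat {p t : ℕ} (S : Matrix (Fin p) (Fin p) ℝ) (s : TrtSeq p t) (i j : Fin 2) :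
    Matrix (Fin t) (Fin t) ℝ :=
  Bmat t * (Gmat i s)ᵀ * Btil S * Gmat j s * Bmat t

/-- `c_{sij} = tr Ĉ_{sij}`. -/
def cseq {p t : ℕ} (S : Matrix (Fin p) (Fin p) ℝ) (s : TrtSeq p t) (i j : Fin 2) : ℝ :=
  (Chat S s i j).trace

/-- `Ĉ_{dij} = n ∑_s p_s Ĉ_{sij}`. -/
def ChatD {p t : ℕ} (n : ℕ) (S : Matrix (Fin p) (Fin p) ℝ) (w : TrtSeq p t → ℝ)
    (i j : Fin 2) : Matrix (Fin t) (Fin t) ℝ :=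
  (n : ℝ) • ∑ s : TrtSeq p t, w s • Chat S s i j

/-- `C_{dij} = Ĉ_{dij} - n (∑_s p_s G_i(s) B_t)' B̃ (∑_s p_s G_j(s) B_t)`. -/
def CD {p t : ℕ} (n : ℕ) (S : Matrix (Fin p) (Fin p) ℝ) (w : TrtSeq p t → ℝ)
    (i j : Fin 2) : Matrix (Fin t) (Fin t) ℝ :=
  ChatD n S w i j -
    (n : ℝ) • ((∑ s : TrtSeq p t, w s • (Gmat i s * Bmat t))ᵀ * Btil S *
      (∑ s : TrtSeq p t, w s • (Gmat j s * Bmat t)))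

/-- `c_{dij} = tr Ĉ_{dij} = n ∑_s p_s c_{sij}`. -/
def cD {p t : ℕ} (n : ℕ) (S : Matrix (Fin p) (Fin p) ℝ) (w : TrtSeq p t → ℝ)
    (i j : Fin 2) : ℝ :=
  (ChatD n S w i j).trace

/-- Fisher information matrix `C_{d,τ0,λ0}` for the direct treatment effects under the
proportional model. -/
def CInfo {p t : ℕ} (n : ℕ) (S : Matrix (Fin p) (Fin p) ℝ) (w : TrtSeq p t → ℝ)
    (τ0 : Fin t → ℝ) (l0 : ℝ) : Matrix (Fin t) (Fin t) ℝ :=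
  CD n S w 0 0 + l0 • (CD n S w 0 1 + CD n S w 1 0) + (l0 ^ 2) • CD n S w 1 1 -
    (τ0 ⬝ᵥ (CD n S w 1 1 *ᵥ τ0))⁻¹ •
      ((CD n S w 0 1 + l0 • CD n S w 1 1) * vecMulVec τ0 τ0 *
        (CD n S w 1 0 + l0 • CD n S w 1 1))

/-- Permutation matrix `S_σ` with `(S_σ)_{j,i} = 1` iff `i = σ j`. -/
def Smat {t : ℕ} (σ : Equiv.Perm (Fin t)) : Matrix (Fin t) (Fin t) ℝ :=
  Matrix.of fun j i => if i = σ j then 1 else 0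

/-- The relabelled sequence `σ ∘ s`. -/
def permSeq {p t : ℕ} (σ : Equiv.Perm (Fin t)) (s : TrtSeq p t) : TrtSeq p t := fun k => σ (s k)

/-- The design `σ d`, with weights `(σd)_s = p_{σ⁻¹ ∘ s}`. -/
def permDesign {p t : ℕ} (σ : Equiv.Perm (Fin t)) (w : TrtSeq p t → ℝ) : TrtSeq p t → ℝ :=
  fun s => w (permSeq σ⁻¹ s)

/-- A design is symmetric if its weights are invariant under treatment relabelling. -/
def IsSymmetricDesign {p t : ℕ} (w : TrtSeq p t → ℝ) : Prop :=
  ∀ (σ : Equiv.Perm (Fin t)) (s : TrtSeq p t), w (permSeq σ s) = w s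

/-- The symmetrized design `d*` with weights `p*_s = (1/t!) ∑_σ p_{σ⁻¹ ∘ s}`. -/
def symmetrize {p t : ℕ} (w : TrtSeq p t → ℝ) : TrtSeq p t → ℝ :=
  fun s => ((Nat.factorial t : ℝ))⁻¹ * ∑ σ : Equiv.Perm (Fin t), permDesign σ w s

/-- `q_s(x) = c_{s11} + 2 c_{s12} x + c_{s22} x²`. -/
def qSeq {p t : ℕ} (S : Matrix (Fin p) (Fin p) ℝ) (s : TrtSeq p t) (x : ℝ) : ℝ :=
  cseq S s 0 0 + 2 * cseq S s 0 1 * x + cseq S s 1 1 * x ^ 2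

/-- `q(x) = max_{s ∈ S} q_s(x)`. -/
def qMax (p t : ℕ) (S : Matrix (Fin p) (Fin p) ℝ) (x : ℝ) : ℝ :=
  sSup (Set.range fun s : TrtSeq p t => qSeq S s x)

/-- `y* = inf_x q(x)`. -/
def yStar (p t : ℕ) (S : Matrix (Fin p) (Fin p) ℝ) : ℝ := ⨅ x : ℝ, qMax p t S x

/-- `q_d(x) = ∑_s p_s q_s(x)`. -/
def qD {p t : ℕ} (S : Matrix (Fin p) (Fin p) ℝ) (w : TrtSeq p t → ℝ) (x : ℝ) : ℝ :=
  ∑ s : TrtSeq p t, w s * qSeq S s x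

/-- `x_d = -c_{d12}/c_{d22}`. -/
def xD {p t : ℕ} (n : ℕ) (S : Matrix (Fin p) (Fin p) ℝ) (w : TrtSeq p t → ℝ) : ℝ :=
  -(cD n S w 0 1) / cD n S w 1 1

/-- An exchangeable prior: a probability measure on `{τ : 1'τ = 0, τ ≠ 0}` that is
invariant under all coordinate permutations of `ℝ^t`. -/
def IsExchangeablePrior {t : ℕ} (g : Measure (Fin t → ℝ)) : Prop :=
  IsProbabilityMeasure g ∧
    g {τ : Fin t → ℝ | ¬((∑ i, τ i) = 0 ∧ τ ≠ 0)} = 0 ∧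
    ∀ σ : Equiv.Perm (Fin t), Measure.map (fun τ i => τ (σ i)) g = g

/-- `m_d(τ0) = min {ℓ' C_{d,τ0,λ0} ℓ : 1'ℓ = 0, ℓ'ℓ = 1}`. -/
def mD {p t : ℕ} (n : ℕ) (S : Matrix (Fin p) (Fin p) ℝ) (w : TrtSeq p t → ℝ) (l0 : ℝ)
    (τ0 : Fin t → ℝ) : ℝ :=
  sInf {v : ℝ | ∃ l : Fin t → ℝ, (∑ i, l i) = 0 ∧ l ⬝ᵥ l = 1 ∧
    v = l ⬝ᵥ (CInfo n S w τ0 l0 *ᵥ l)}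

/-- The E-criterion value `E_{g,λ0}(d) = ∫ m_d(τ0) g(dτ0)`. -/
def Ecrit {p t : ℕ} (n : ℕ) (S : Matrix (Fin p) (Fin p) ℝ) (g : Measure (Fin t → ℝ))
    (l0 : ℝ) (w : TrtSeq p t → ℝ) : ℝ :=
  ∫ τ0, mD n S w l0 τ0 ∂g

/-- Competing designs for E-optimality: designs with a.e. positive `τ0' C_{d22} τ0`
and `g`-integrable `m_d`. -/
def EAdmissible {p t : ℕ} (n : ℕ) (S : Matrix (Fin p) (Fin p) ℝ) (g : Measure (Fin t → ℝ))
    (l0 : ℝ) (w : TrtSeq p t → ℝ) : Prop :=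
  IsDesign w ∧ (∀ᵐ τ0 ∂g, 0 < τ0 ⬝ᵥ (CD n S w 1 1 *ᵥ τ0)) ∧
    Integrable (mD n S w l0) g

/-- `d` is `E_{g,λ0}`-optimal. -/
def EOptimal {p t : ℕ} (n : ℕ) (S : Matrix (Fin p) (Fin p) ℝ) (g : Measure (Fin t → ℝ))
    (l0 : ℝ) (w : TrtSeq p t → ℝ) : Prop :=
  ∀ w' : TrtSeq p t → ℝ, EAdmissible n S g l0 w' → Ecrit n S g l0 w' ≤ Ecrit n S g l0 w

/-- A pseudo symmetric design: treatments equireplicated in each period,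
and all `C_{dij}` completely symmetric. -/
def IsPseudoSymmetric {p t : ℕ} (n : ℕ) (S : Matrix (Fin p) (Fin p) ℝ)
    (w : TrtSeq p t → ℝ) : Prop :=
  (∀ (k : Fin p) (i : Fin t),
    (∑ s ∈ Finset.univ.filter fun s : TrtSeq p t => s k = i, w s) = 1 / (t : ℝ)) ∧
  ∀ i j : Fin 2, ∃ a b : ℝ, CD n S w i j = a • (1 : Matrix (Fin t) (Fin t) ℝ) + b • Jmat t

/-- Eigenvalues of a (Hermitian) matrix sorted increasingly with multiplicity. -/
def sortedEigs {t : ℕ} (C : Matrix (Fin t) (Fin t) ℝ) : Fin t → ℝ :=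
  if h : C.IsHermitian then (fun i => h.eigenvalues (Tuple.sort h.eigenvalues i))
  else fun _ => 0

/-- `Φ_D(C) = (∏_{i=1}^{t-1} a_i)^{1/(t-1)}` (eigenvalues sorted increasingly). -/
def PhiD {t : ℕ} (C : Matrix (Fin t) (Fin t) ℝ) : ℝ :=
  (∏ i ∈ Finset.univ.filter fun i : Fin t => (i : ℕ) ≠ 0, sortedEigs C i) ^ (((t : ℝ) - 1)⁻¹)

/-- `Φ_A(C) = (t-1)(∑_{i=1}^{t-1} a_i⁻¹)⁻¹` if `a_1 > 0`, else `0`. -/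
def PhiA {t : ℕ} (C : Matrix (Fin t) (Fin t) ℝ) : ℝ :=
  if ∀ i : Fin t, (i : ℕ) ≠ 0 → 0 < sortedEigs C i then
    ((t : ℝ) - 1) *
      (∑ i ∈ Finset.univ.filter fun i : Fin t => (i : ℕ) ≠ 0, (sortedEigs C i)⁻¹)⁻¹
  else 0

/-- `Φ_T(C) = tr(C)/(t-1)`. -/
def PhiT {t : ℕ} (C : Matrix (Fin t) (Fin t) ℝ) : ℝ := C.trace / ((t : ℝ) - 1)

/-- The criterion value `∫ Φ(C_{d,τ0,λ0}) g(dτ0)`. -/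
def PhiCrit {p t : ℕ} (n : ℕ) (S : Matrix (Fin p) (Fin p) ℝ)
    (Phi : Matrix (Fin t) (Fin t) ℝ → ℝ) (g : Measure (Fin t → ℝ)) (l0 : ℝ)
    (w : TrtSeq p t → ℝ) : ℝ :=
  ∫ τ0, Phi (CInfo n S w τ0 l0) ∂g

/-- Competing designs for a `Φ`-criterion. -/
def PhiAdmissible {p t : ℕ} (n : ℕ) (S : Matrix (Fin p) (Fin p) ℝ)
    (Phi : Matrix (Fin t) (Fin t) ℝ → ℝ) (g : Measure (Fin t → ℝ)) (l0 : ℝ)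
    (w : TrtSeq p t → ℝ) : Prop :=
  IsDesign w ∧ (∀ᵐ τ0 ∂g, 0 < τ0 ⬝ᵥ (CD n S w 1 1 *ᵥ τ0)) ∧
    Integrable (fun τ0 => Phi (CInfo n S w τ0 l0)) g

/-- `d` is `Φ_{g,λ0}`-optimal. -/
def PhiOptimal {p t : ℕ} (n : ℕ) (S : Matrix (Fin p) (Fin p) ℝ)
    (Phi : Matrix (Fin t) (Fin t) ℝ → ℝ) (g : Measure (Fin t → ℝ)) (l0 : ℝ)
    (w : TrtSeq p t → ℝ) : Prop :=
  ∀ w' : TrtSeq p t → ℝ, PhiAdmissible n S Phi g l0 w' →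
    PhiCrit n S Phi g l0 w' ≤ PhiCrit n S Phi g l0 w

/-- `H_1(s) = F_s`, `H_2(s) = T_s + λ0 F_s` (for estimating `λ`). -/
def Hmat {p t : ℕ} (l0 : ℝ) (i : Fin 2) (s : TrtSeq p t) : Matrix (Fin p) (Fin t) ℝ :=
  if i = 0 then Fmat s else Tmat s + l0 • Fmat s

/-- `Â_{sij} = B_t H_i(s)' B̃ H_j(s) B_t`. -/
def Ahat {p t : ℕ} (S : Matrix (Fin p) (Fin p) ℝ) (l0 : ℝ) (s : TrtSeq p t) (i j : Fin 2) :
    Matrix (Fin t) (Fin t) ℝ :=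
  Bmat t * (Hmat l0 i s)ᵀ * Btil S * Hmat l0 j s * Bmat t

/-- `h_{sij} = tr Â_{sij}`. -/
def hseq {p t : ℕ} (S : Matrix (Fin p) (Fin p) ℝ) (l0 : ℝ) (s : TrtSeq p t) (i j : Fin 2) : ℝ :=
  (Ahat S l0 s i j).trace

/-- `Â_{dij} = n ∑_s p_s Â_{sij}`. -/
def AhatD {p t : ℕ} (n : ℕ) (S : Matrix (Fin p) (Fin p) ℝ) (l0 : ℝ) (w : TrtSeq p t → ℝ)
    (i j : Fin 2) : Matrix (Fin t) (Fin t) ℝ :=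
  (n : ℝ) • ∑ s : TrtSeq p t, w s • Ahat S l0 s i j

/-- `A_{dij} = Â_{dij} - n (∑_s p_s H_i(s) B_t)' B̃ (∑_s p_s H_j(s) B_t)`. -/
def AD {p t : ℕ} (n : ℕ) (S : Matrix (Fin p) (Fin p) ℝ) (l0 : ℝ) (w : TrtSeq p t → ℝ)
    (i j : Fin 2) : Matrix (Fin t) (Fin t) ℝ :=
  AhatD n S l0 w i j -
    (n : ℝ) • ((∑ s : TrtSeq p t, w s • (Hmat l0 i s * Bmat t))ᵀ * Btil S *
      (∑ s : TrtSeq p t, w s • (Hmat l0 j s * Bmat t)))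

/-- `G` is a generalized inverse of `A`. -/
def IsGInv {t : ℕ} (A G : Matrix (Fin t) (Fin t) ℝ) : Prop := A * G * A = A

/-- `A_d(G) = A_{d11} - A_{d12} G A_{d21}` with `A_{d21} = A_{d12}'`. -/
def ADfun {p t : ℕ} (n : ℕ) (S : Matrix (Fin p) (Fin p) ℝ) (l0 : ℝ) (w : TrtSeq p t → ℝ)
    (G : Matrix (Fin t) (Fin t) ℝ) : Matrix (Fin t) (Fin t) ℝ :=
  AD n S l0 w 0 0 - AD n S l0 w 0 1 * G * (AD n S l0 w 0 1)ᵀ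

/-- `r_s(x) = h_{s11} + 2 h_{s12} x + h_{s22} x²`. -/
def rSeq {p t : ℕ} (S : Matrix (Fin p) (Fin p) ℝ) (l0 : ℝ) (s : TrtSeq p t) (x : ℝ) : ℝ :=
  hseq S l0 s 0 0 + 2 * hseq S l0 s 0 1 * x + hseq S l0 s 1 1 * x ^ 2

/-- `r(x) = max_s r_s(x)`. -/
def rMax (p t : ℕ) (S : Matrix (Fin p) (Fin p) ℝ) (l0 : ℝ) (x : ℝ) : ℝ :=
  sSup (Set.range fun s : TrtSeq p t => rSeq S l0 s x)

/-- `y_0 = inf_x r(x)`. -/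
def yZero (p t : ℕ) (S : Matrix (Fin p) (Fin p) ℝ) (l0 : ℝ) : ℝ := ⨅ x : ℝ, rMax p t S l0 x


/-- quadratic/bilinear form of a matrix -/
def bil {m : ℕ} (A : Matrix (Fin m) (Fin m) ℝ) (x y : Fin m → ℝ) : ℝ := x ⬝ᵥ (A *ᵥ y)

theorem bil_add_left {m : ℕ} (A : Matrix (Fin m) (Fin m) ℝ) (x y z : Fin m → ℝ) :
    bil A (x + y) z = bil A x z + bil A y z := by simp [bil, add_dotProduct]

theorem bil_add_right {m : ℕ} (A : Matrix (Fin m) (Fin m) ℝ) (x y z : Fin m → ℝ) :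
    bil A x (y + z) = bil A x y + bil A x z := by simp [bil, mulVec_add, dotProduct_add]

theorem bil_smul_left {m : ℕ} (A : Matrix (Fin m) (Fin m) ℝ) (c : ℝ) (x z : Fin m → ℝ) :
    bil A (c • x) z = c * bil A x z := by simp [bil]

theorem bil_smul_right {m : ℕ} (A : Matrix (Fin m) (Fin m) ℝ) (c : ℝ) (x z : Fin m → ℝ) :
    bil A x (c • z) = c * bil A x z := by simp [bil, mulVec_smul]

theorem bil_sum_right {m : ℕ} {ι : Type*} (A : Matrix (Fin m) (Fin m) ℝ) (x : Fin m → ℝ)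
    (T : Finset ι) (f : ι → Fin m → ℝ) :
    bil A x (∑ i ∈ T, f i) = ∑ i ∈ T, bil A x (f i) := by
  simp [bil, mulVec_sum, dotProduct_sum]

theorem bil_sub_left {m : ℕ} (A : Matrix (Fin m) (Fin m) ℝ) (x y z : Fin m → ℝ) :
    bil A (x - y) z = bil A x z - bil A y z := by simp [bil, sub_dotProduct]

theorem bil_sub_right {m : ℕ} (A : Matrix (Fin m) (Fin m) ℝ) (x y z : Fin m → ℝ) :
    bil A x (y - z) = bil A x y - bil A x z := by simp [bil, mulVec_sub, dotProduct_sub]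

theorem bil_transpose {m : ℕ} (A : Matrix (Fin m) (Fin m) ℝ) (x y : Fin m → ℝ) :
    bil A x y = bil Aᵀ y x := by
  simp only [bil]
  rw [dotProduct_mulVec, ← mulVec_transpose, dotProduct_comm]

theorem bil_symm {m : ℕ} (A : Matrix (Fin m) (Fin m) ℝ) (hA : Aᵀ = A) (x y : Fin m → ℝ) :
    bil A x y = bil A y x := by
  rw [bil_transpose, hA]

/-- Jensen for a positive semidefinite form. -/
theorem bil_jensen {m : ℕ} {ι : Type*} (A : Matrix (Fin m) (Fin m) ℝ) (hA : Aᵀ = A)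
    (hpos : ∀ x, 0 ≤ bil A x x) (T : Finset ι) (c : ι → ℝ) (hc : ∀ i ∈ T, 0 ≤ c i)
    (hsum : ∑ i ∈ T, c i = 1) (f : ι → Fin m → ℝ) :
    bil A (∑ i ∈ T, c i • f i) (∑ i ∈ T, c i • f i) ≤ ∑ i ∈ T, c i * bil A (f i) (f i) := by
  set M := ∑ i ∈ T, c i • f i with hM
  have h1 : bil A M M = ∑ i ∈ T, c i * bil A M (f i) := by
    conv_lhs => rw [hM, bil_sum_right, ← hM]
    simp [bil_smul_right]
  have h2 : ∑ i ∈ T, c i * (2 * bil A M (f i) - bil A M M) ≤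
      ∑ i ∈ T, c i * bil A (f i) (f i) := by
    refine Finset.sum_le_sum fun i hi => mul_le_mul_of_nonneg_left ?_ (hc i hi)
    have := hpos (f i - M)
    rw [bil_sub_left, bil_sub_right, bil_sub_right, bil_symm A hA (f i) M] at this
    linarith
  have h3 : ∑ i ∈ T, c i * (2 * bil A M (f i) - bil A M M) = bil A M M := by
    have : ∀ i, c i * (2 * bil A M (f i) - bil A M M)
        = 2 * (c i * bil A M (f i)) - c i * bil A M M := fun i => by ring
    simp only [this]
    rw [Finset.sum_sub_distrib, ← Finset.mul_sum, ← h1, ← Finset.sum_mul, hsum]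
    ring
  linarith

theorem Btil_symm {p : ℕ} (S : Matrix (Fin p) (Fin p) ℝ) (hS : S.PosDef) :
    (Btil S)ᵀ = Btil S := by
  have h : (S⁻¹)ᵀ = S⁻¹ := by
    have := hS.inv.isHermitian
    simpa [Matrix.IsHermitian, conjTranspose_eq_transpose_of_trivial] using this
  have hJ : (Jmat p)ᵀ = Jmat p := by ext; simp [Jmat]
  simp only [Btil, transpose_sub, transpose_smul, transpose_mul, h, hJ, Matrix.mul_assoc]

theorem Btil_nonneg {p : ℕ} (S : Matrix (Fin p) (Fin p) ℝ) (hS : S.PosDef) (x : Fin p → ℝ) :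
    0 ≤ bil (Btil S) x x := by
  have h : (S⁻¹)ᵀ = S⁻¹ := by
    have := hS.inv.isHermitian
    simpa [Matrix.IsHermitian, conjTranspose_eq_transpose_of_trivial] using this
  have hpos : ∀ y, 0 ≤ bil (S⁻¹) y y := fun y => by
    simpa [bil] using hS.inv.posSemidef.dotProduct_mulVec_nonneg y
  set e : Fin p → ℝ := fun _ => 1 with he
  have hJ : Jmat p = vecMulVec e e := by ext; simp [Jmat, vecMulVec, he]
  have hB : bil (Btil S) x x = bil S⁻¹ x x - (bil S⁻¹ e e)⁻¹ * (bil S⁻¹ x e * bil S⁻¹ e x) := by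
    simp only [bil, Btil, sub_mulVec, smul_mulVec, dotProduct_sub, dotProduct_smul, hJ,
      ← mulVec_mulVec, vecMulVec_mulVec, mulVec_smul, smul_eq_mul, op_smul_eq_smul]
    ring
  have := hpos (x - ((bil S⁻¹ e e)⁻¹ * bil S⁻¹ e x) • e)
  simp only [bil_sub_left, bil_sub_right, bil_smul_left, bil_smul_right] at this
  rw [bil_symm _ h x e] at this hB
  rw [hB]
  have h0 : (bil S⁻¹ e e)⁻¹ * bil S⁻¹ e e * (bil S⁻¹ e e)⁻¹ = (bil S⁻¹ e e)⁻¹ := by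
    by_cases hz : bil S⁻¹ e e = 0
    · simp [hz]
    · field_simp
  generalize (bil S⁻¹ e e)⁻¹ = r at *
  generalize bil S⁻¹ e e = D at *
  generalize bil S⁻¹ e x = y at *
  have h1 : r * y * (r * y * D) = r * (y * y) := by
    linear_combination (y * y) * h0
  linarith

theorem bil_CD {p t : ℕ} (n : ℕ) (S : Matrix (Fin p) (Fin p) ℝ) (w : TrtSeq p t → ℝ)
    (i j : Fin 2) (u v : Fin t → ℝ) :
    bil (CD n S w i j) u v = n * (∑ s, w s * bil (Btil S) ((Gmat i s * Bmat t) *ᵥ u)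
        ((Gmat j s * Bmat t) *ᵥ v)
      - bil (Btil S) (∑ s, w s • ((Gmat i s * Bmat t) *ᵥ u))
        (∑ s, w s • ((Gmat j s * Bmat t) *ᵥ v))) := by
  have hBt : (Bmat t)ᵀ = Bmat t := by
    ext a b; simp [Bmat, Jmat, Matrix.one_apply, eq_comm]
  have key : ∀ (X Y : Matrix (Fin p) (Fin t) ℝ),
      u ⬝ᵥ ((Xᵀ * Btil S * Y) *ᵥ v) = bil (Btil S) (X *ᵥ u) (Y *ᵥ v) := by
    intro X Y
    simp only [bil, ← mulVec_mulVec]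
    rw [dotProduct_mulVec, vecMul_transpose]
  have hs : ∀ (k : Fin 2) (x : Fin t → ℝ), ∑ s, w s • ((Gmat k s * Bmat t) *ᵥ x)
      = (∑ s : TrtSeq p t, w s • (Gmat k s * Bmat t)) *ᵥ x := by
    intro k x
    rw [sum_mulVec]
    simp only [smul_mulVec]
  rw [hs, hs, ← key]
  simp only [← key]
  have hc : ∀ s : TrtSeq p t, Chat S s i j = (Gmat i s * Bmat t)ᵀ * Btil S * (Gmat j s * Bmat t) := by
    intro s
    simp only [Chat, transpose_mul, hBt, Matrix.mul_assoc]
  simp only [bil, CD, ChatD, hc, sub_mulVec, smul_mulVec, sum_mulVec, dotProduct_sub,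
    dotProduct_smul, dotProduct_sum, smul_eq_mul]
  ring

theorem CD_transpose {p t : ℕ} (n : ℕ) (S : Matrix (Fin p) (Fin p) ℝ) (hS : S.PosDef)
    (w : TrtSeq p t → ℝ) (i j : Fin 2) : (CD n S w i j)ᵀ = CD n S w j i := by
  have hBt : (Bmat t)ᵀ = Bmat t := by
    ext a b; simp [Bmat, Jmat, Matrix.one_apply, eq_comm]
  simp only [CD, ChatD, Chat, transpose_sub, transpose_smul, transpose_sum, transpose_mul, hBt,
    Btil_symm S hS, transpose_transpose, Matrix.mul_assoc]

/-- The joint quadratic form. -/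
def Mform {p t : ℕ} (n : ℕ) (S : Matrix (Fin p) (Fin p) ℝ) (w : TrtSeq p t → ℝ)
    (u v : Fin t → ℝ) : ℝ :=
  bil (CD n S w 0 0) u u + bil (CD n S w 0 1) u v + bil (CD n S w 1 0) v u
    + bil (CD n S w 1 1) v v

def zvec {p t : ℕ} (u v : Fin t → ℝ) (s : TrtSeq p t) : Fin p → ℝ :=
  (Gmat 0 s * Bmat t) *ᵥ u + (Gmat 1 s * Bmat t) *ᵥ v

theorem Mform_eq {p t : ℕ} (n : ℕ) (S : Matrix (Fin p) (Fin p) ℝ) (w : TrtSeq p t → ℝ)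
    (u v : Fin t → ℝ) :
    Mform n S w u v = n * (∑ s, w s * bil (Btil S) (zvec u v s) (zvec u v s)
      - bil (Btil S) (∑ s, w s • zvec u v s) (∑ s, w s • zvec u v s)) := by
  simp only [Mform, bil_CD, zvec, smul_add, Finset.sum_add_distrib, bil_add_left, bil_add_right,
    mul_add]
  ring

/-- concavity -/
theorem Mform_concave {p t : ℕ} (n : ℕ) (S : Matrix (Fin p) (Fin p) ℝ) (hS : S.PosDef)
    (w : TrtSeq p t → ℝ) (u v : Fin t → ℝ) :
    ((Nat.factorial t : ℝ))⁻¹ * ∑ σ : Equiv.Perm (Fin t), Mform n S (permDesign σ w) u v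
      ≤ Mform n S (symmetrize w) u v := by
  set c : ℝ := ((Nat.factorial t : ℝ))⁻¹ with hc
  have hc0 : 0 ≤ c := by positivity
  have hsum : ∑ _σ : Equiv.Perm (Fin t), c = 1 := by
    have : (Nat.factorial t : ℝ) ≠ 0 := by positivity
    simp [Fintype.card_perm, hc, this]
  have hj := bil_jensen (Btil S) (Btil_symm S hS) (Btil_nonneg S hS) Finset.univ
    (fun _ : Equiv.Perm (Fin t) => c) (fun _ _ => hc0) hsum
    (fun σ => ∑ s, permDesign σ w s • zvec u v s)
  have e1 : ∑ s, symmetrize w s • zvec u v s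
      = ∑ σ : Equiv.Perm (Fin t), c • ∑ s, permDesign σ w s • zvec u v s := by
    simp only [symmetrize, ← hc, Finset.smul_sum, Finset.mul_sum, Finset.sum_smul, mul_smul]
    rw [Finset.sum_comm]
  have e2 : ∑ s, symmetrize w s * bil (Btil S) (zvec u v s) (zvec u v s)
      = ∑ σ : Equiv.Perm (Fin t),
        c * ∑ s, permDesign σ w s * bil (Btil S) (zvec u v s) (zvec u v s) := by
    simp only [symmetrize, ← hc, Finset.mul_sum, Finset.sum_mul, mul_assoc]
    rw [Finset.sum_comm]
  simp only [Mform_eq]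
  rw [e1, e2, ← Finset.mul_sum, Finset.sum_sub_distrib]
  rw [← Finset.mul_sum, mul_left_comm, mul_sub]
  rw [← Finset.mul_sum] at hj
  exact mul_le_mul_of_nonneg_left (by linarith) (Nat.cast_nonneg n)

theorem Gmat_perm {p t : ℕ} (σ : Equiv.Perm (Fin t)) (i : Fin 2) (s : TrtSeq p t) :
    Gmat i (permSeq σ s) = Gmat i s * Smat σ := by
  ext k a
  have key : ∀ b : Fin t, ∑ j, (if b = j then (1:ℝ) else 0) * (if a = σ j then 1 else 0)
      = if σ b = a then 1 else 0 := by
    intro b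
    rw [Finset.sum_eq_single b]
    · simp [eq_comm (a := a)]
    · intro j _ hj
      simp [hj.symm]
    · simp
  by_cases hi : i = 0
  · simp only [Gmat, hi, Tmat, Smat, permSeq, Matrix.mul_apply, Matrix.of_apply, if_true, key]
    congr
  · by_cases hk : (k : ℕ) = 0
    · simp [Gmat, hi, Fmat, Smat, permSeq, Matrix.mul_apply, hk]
    · simp only [Gmat, hi, Fmat, Smat, permSeq, Matrix.mul_apply, Matrix.of_apply, hk, if_false, key]
      congr

theorem Smat_Bmat {t : ℕ} (σ : Equiv.Perm (Fin t)) : Smat σ * Bmat t = Bmat t * Smat σ := by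
  have h : Smat σ * Jmat t = Jmat t * Smat σ := by
    ext a b
    simp only [Smat, Jmat, Matrix.mul_apply, Matrix.of_apply, mul_one, one_mul]
    rw [Finset.sum_ite_eq' Finset.univ (σ a) (fun _ => (1:ℝ))]
    have : ∀ j, (if b = σ j then (1:ℝ) else 0) = if j = σ⁻¹ b then 1 else 0 := by
      intro j
      congr 1
      rw [Equiv.Perm.eq_inv_iff_eq, eq_comm (a := b)]
    simp only [this]
    rw [Finset.sum_ite_eq' Finset.univ (σ⁻¹ b) (fun _ => (1:ℝ))]
    simp
  simp [Bmat, mul_sub, sub_mul, h]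

theorem sum_permDesign {p t : ℕ} {E : Type*} [AddCommMonoid E] (σ : Equiv.Perm (Fin t))
    (w : TrtSeq p t → ℝ) (f : ℝ → TrtSeq p t → E) :
    ∑ s, f (permDesign σ w s) s = ∑ s, f (w s) (permSeq σ s) := by
  refine (Equiv.sum_comp (Equiv.arrowCongr (Equiv.refl (Fin p)) σ)
    (fun s => f (permDesign σ w s) s)).symm.trans ?_
  refine Finset.sum_congr rfl fun s _ => ?_
  have h1 : (Equiv.arrowCongr (Equiv.refl (Fin p)) σ) s = permSeq σ s := by
    ext k; simp [permSeq]
  have h2 : permSeq σ⁻¹ (permSeq σ s) = s := by ext k; simp [permSeq]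
  simp only [h1, permDesign, h2]

theorem bil_CD_perm {p t : ℕ} (n : ℕ) (S : Matrix (Fin p) (Fin p) ℝ) (w : TrtSeq p t → ℝ)
    (σ : Equiv.Perm (Fin t)) (i j : Fin 2) (u v : Fin t → ℝ) :
    bil (CD n S (permDesign σ w) i j) u v = bil (CD n S w i j) (Smat σ *ᵥ u) (Smat σ *ᵥ v) := by
  have h : ∀ (k : Fin 2) (s : TrtSeq p t) (x : Fin t → ℝ),
      (Gmat k (permSeq σ s) * Bmat t) *ᵥ x = (Gmat k s * Bmat t) *ᵥ (Smat σ *ᵥ x) := by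
    intro k s x
    rw [Gmat_perm, Matrix.mul_assoc, Smat_Bmat, mulVec_mulVec, Matrix.mul_assoc]
  rw [bil_CD, bil_CD]
  rw [sum_permDesign σ w (fun r s => r * bil (Btil S) ((Gmat i s * Bmat t) *ᵥ u)
        ((Gmat j s * Bmat t) *ᵥ v)),
    sum_permDesign σ w (fun r s => r • ((Gmat i s * Bmat t) *ᵥ u)),
    sum_permDesign σ w (fun r s => r • ((Gmat j s * Bmat t) *ᵥ v))]
  simp only [h]

theorem bil_CInfo {p t : ℕ} (n : ℕ) (S : Matrix (Fin p) (Fin p) ℝ) (hS : S.PosDef)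
    (w : TrtSeq p t → ℝ) (τ u : Fin t → ℝ) (l0 : ℝ) :
    bil (CInfo n S w τ l0) u u = Mform n S w u (l0 • u) -
      (bil (CD n S w 1 1) τ τ)⁻¹ * (bil (CD n S w 0 1) u τ + l0 * bil (CD n S w 1 1) u τ) ^ 2 := by
  have h1 : bil (CD n S w 1 0) τ u = bil (CD n S w 0 1) u τ := by
    rw [bil_transpose, CD_transpose n S hS]
  have h2 : bil (CD n S w 1 1) τ u = bil (CD n S w 1 1) u τ := by
    rw [bil_transpose, CD_transpose n S hS]
  have h3 : bil (CInfo n S w τ l0) u u = Mform n S w u (l0 • u) -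
      (bil (CD n S w 1 1) τ τ)⁻¹ * ((bil (CD n S w 0 1) u τ + l0 * bil (CD n S w 1 1) u τ) *
      (bil (CD n S w 1 0) τ u + l0 * bil (CD n S w 1 1) τ u)) := by
    simp only [Mform, bil_smul_left, bil_smul_right]
    simp only [bil, CInfo, sub_mulVec, add_mulVec, smul_mulVec, dotProduct_sub, dotProduct_add,
      dotProduct_smul, ← mulVec_mulVec, vecMulVec_mulVec, mulVec_smul, smul_eq_mul,
      op_smul_eq_smul]
    ring
  rw [h3, h1, h2]
  ring

theorem Mform_line {p t : ℕ} (n : ℕ) (S : Matrix (Fin p) (Fin p) ℝ) (hS : S.PosDef)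
    (w : TrtSeq p t → ℝ) (τ u : Fin t → ℝ) (l0 x : ℝ) :
    Mform n S w u (l0 • u + x • τ) = Mform n S w u (l0 • u)
      + 2 * x * (bil (CD n S w 0 1) u τ + l0 * bil (CD n S w 1 1) u τ)
      + x ^ 2 * bil (CD n S w 1 1) τ τ := by
  have h1 : bil (CD n S w 1 0) τ u = bil (CD n S w 0 1) u τ := by
    rw [bil_transpose, CD_transpose n S hS]
  have h2 : bil (CD n S w 1 1) τ u = bil (CD n S w 1 1) u τ := by
    rw [bil_transpose, CD_transpose n S hS]
  simp only [Mform, bil_smul_left, bil_smul_right, bil_add_left, bil_add_right, h1, h2]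
  ring

theorem CInfo_transpose {p t : ℕ} (n : ℕ) (S : Matrix (Fin p) (Fin p) ℝ) (hS : S.PosDef)
    (w : TrtSeq p t → ℝ) (τ : Fin t → ℝ) (l0 : ℝ) :
    (CInfo n S w τ l0)ᵀ = CInfo n S w τ l0 := by
  simp only [CInfo, transpose_sub, transpose_add, transpose_smul, transpose_mul,
    CD_transpose n S hS, transpose_vecMulVec, Matrix.mul_assoc]
  rw [add_comm (CD n S w 1 0) (CD n S w 0 1)]

theorem CInfo_le_Mform {p t : ℕ} (n : ℕ) (S : Matrix (Fin p) (Fin p) ℝ) (hS : S.PosDef)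
    (w : TrtSeq p t → ℝ) (τ u : Fin t → ℝ) (l0 x : ℝ) (ha : 0 < bil (CD n S w 1 1) τ τ) :
    bil (CInfo n S w τ l0) u u ≤ Mform n S w u (l0 • u + x • τ) := by
  rw [bil_CInfo n S hS, Mform_line n S hS]
  generalize bil (CD n S w 1 1) τ τ = a at *
  generalize bil (CD n S w 0 1) u τ + l0 * bil (CD n S w 1 1) u τ = b
  have : 0 ≤ a * (x + a⁻¹ * b) ^ 2 := by positivity
  have e : a * (x + a⁻¹ * b) ^ 2 = x ^ 2 * a + 2 * x * b + a⁻¹ * b ^ 2 := by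
    field_simp
    ring
  linarith

theorem CInfo_eq_Mform {p t : ℕ} (n : ℕ) (S : Matrix (Fin p) (Fin p) ℝ) (hS : S.PosDef)
    (w : TrtSeq p t → ℝ) (τ u : Fin t → ℝ) (l0 : ℝ) (ha : 0 < bil (CD n S w 1 1) τ τ) :
    ∃ x : ℝ, bil (CInfo n S w τ l0) u u = Mform n S w u (l0 • u + x • τ) := by
  refine ⟨-((bil (CD n S w 1 1) τ τ)⁻¹ *
    (bil (CD n S w 0 1) u τ + l0 * bil (CD n S w 1 1) u τ)), ?_⟩
  rw [bil_CInfo n S hS, Mform_line n S hS]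
  generalize bil (CD n S w 1 1) τ τ = a at *
  generalize bil (CD n S w 0 1) u τ + l0 * bil (CD n S w 1 1) u τ = b
  field_simp
  ring

/-- the symmetrized design is symmetric and dominates the average
information matrix in the Loewner order. -/
theorem stmt1 (p t n : ℕ) (hp : 2 ≤ p) (ht : 3 ≤ t) (hn : 1 ≤ n)
    (S : Matrix (Fin p) (Fin p) ℝ) (hS : S.PosDef)
    (w : TrtSeq p t → ℝ) (hw : IsDesign w) (l0 : ℝ)
    (τ0 : Fin t → ℝ) (hτsum : (∑ i, τ0 i) = 0) (hτ0 : τ0 ≠ 0)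
    (hC : ∀ σ : Equiv.Perm (Fin t),
      0 < (Smat σ *ᵥ τ0) ⬝ᵥ (CD n S w 1 1 *ᵥ (Smat σ *ᵥ τ0))) :
    IsSymmetricDesign (symmetrize w) ∧
    0 < τ0 ⬝ᵥ (CD n S (symmetrize w) 1 1 *ᵥ τ0) ∧
    (CInfo n S (symmetrize w) τ0 l0 -
      ((Nat.factorial t : ℝ))⁻¹ •
        ∑ σ : Equiv.Perm (Fin t), CInfo n S (permDesign σ w) τ0 l0).PosSemidef := by
  have hfac : (0:ℝ) < ((Nat.factorial t : ℝ))⁻¹ := by positivity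
  have hposσ : ∀ σ : Equiv.Perm (Fin t), 0 < bil (CD n S (permDesign σ w) 1 1) τ0 τ0 := by
    intro σ
    rw [bil_CD_perm]
    exact hC σ
  have hM0 : ∀ w' : TrtSeq p t → ℝ, Mform n S w' 0 τ0 = bil (CD n S w' 1 1) τ0 τ0 := by
    intro w'
    simp [Mform, bil]
  have hpos : 0 < bil (CD n S (symmetrize w) 1 1) τ0 τ0 := by
    rw [← hM0]
    refine lt_of_lt_of_le ?_ (Mform_concave n S hS w 0 τ0)
    refine mul_pos hfac (Finset.sum_pos (fun σ _ => ?_) Finset.univ_nonempty)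
    rw [hM0]
    exact hposσ σ
  refine ⟨?_, hpos, ?_⟩
  · intro ρ s
    simp only [symmetrize]
    congr 1
    refine (Equiv.sum_comp (Equiv.mulLeft ρ)
      (fun σ => permDesign σ w (permSeq ρ s))).symm.trans ?_
    refine Finset.sum_congr rfl fun σ _ => ?_
    simp only [permDesign]
    congr 1
    ext k
    simp [permSeq]
  · refine Matrix.PosSemidef.of_dotProduct_mulVec_nonneg ?_ ?_
    · rw [Matrix.IsHermitian, conjTranspose_eq_transpose_of_trivial]
      simp only [transpose_sub, transpose_smul, transpose_sum, CInfo_transpose n S hS]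
    · intro u
      obtain ⟨x, hx⟩ := CInfo_eq_Mform n S hS (symmetrize w) τ0 u l0 hpos
      have h1 := Mform_concave n S hS w u (l0 • u + x • τ0)
      have h2 : ∑ σ : Equiv.Perm (Fin t), bil (CInfo n S (permDesign σ w) τ0 l0) u u ≤
          ∑ σ : Equiv.Perm (Fin t), Mform n S (permDesign σ w) u (l0 • u + x • τ0) :=
        Finset.sum_le_sum fun σ _ => CInfo_le_Mform n S hS _ τ0 u l0 x (hposσ σ)
      have h3 := mul_le_mul_of_nonneg_left h2 hfac.le
      have h4 : star u ⬝ᵥ ((CInfo n S (symmetrize w) τ0 l0 - ((Nat.factorial t : ℝ))⁻¹ •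
          ∑ σ : Equiv.Perm (Fin t), CInfo n S (permDesign σ w) τ0 l0) *ᵥ u)
          = bil (CInfo n S (symmetrize w) τ0 l0) u u - ((Nat.factorial t : ℝ))⁻¹ *
          ∑ σ : Equiv.Perm (Fin t), bil (CInfo n S (permDesign σ w) τ0 l0) u u := by
        simp only [star_trivial, bil, sub_mulVec, smul_mulVec, sum_mulVec, dotProduct_sub,
          dotProduct_smul, dotProduct_sum, smul_eq_mul]
      rw [h4]
      linarith
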